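/- arXiv:2605.26237 — 3 statements merged into one kernel-verified Lean document; each statement's English description precedes it below -/
import Mathlib

section
/- Let W carry a degree assignment (d_c)_{c∈C} and a combinatorial quasi-fiber structure (g, (m_c), B) of rank r. Assume: (a) for every P ∈ B, every δ ∈ Δ_P and every s ∈ {1,…,r} with s ≠ g(φ_P(δ)), M_s(δ) = 0 in k; (b) Σ_{c∈g^{-1}(s)} d_c·m_c ≡ 0 (mod p) for every s ∈ {1,…,r}. Then for all a,b ∈ k^r, ω_a ∧ ω_b = 0 in A²_{W,k}. Moreover, if for each s ∈ {1,…,r} there exists c ∈ g^{-1}(s) with p ∤ m_c, then for every a ∈ k^r, dim_k H¹(A*_{W,k}, ·∧ω_a) ≥ r − 1. (Combinatorial form of Theorem 'fibered', part 2, the case of a quasi fiber-type curve of index divisible by p.) -/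
/-!
Fix a point `P` and a branch `δ₀` at `P`. Modulo `I_P` one has `ψ^δ ∧ ψ^δ' = e δ' - e δ` with
`e δ = ψ^{δ₀} ∧ ψ^δ`, so by symmetry of the multiplicities the `P`-component of `α ∧ β` is
`∑_δ (β_δ ∑_{δ'} μ(δ,δ') α_{δ'} - α_δ ∑_{δ'} μ(δ,δ') β_{δ'}) e δ` (`wedge_fst_eq_zero`).
For `α = ω_a` the inner sum is `∑_s a_s M_s(δ)` (`sum_muk_omega`). All terms with `s ≠ g(φ_P(δ))`
vanish, by hypothesis at the base points and trivially elsewhere, so with `t = g(φ_P(δ))` and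
`m = m_{φ_P(δ)}` both products equal `m a_t b_t M_t(δ)` and cancel.
The component at infinity vanishes because `∑_c d_c m_c a_{g(c)} = 0` (`sum_degree_omega`).

Hence every `ω_b` lies in the kernel of `· ∧ ω_a`. If each quasi-fiber contains a component with
multiplicity prime to `p`, the map `b ↦ ω_b` is injective, so that kernel has dimension at least
`r`, and dividing by the line spanned by `ω_a` costs at most one dimension.
-/

open scoped Classical

/-- The weak combinatorial type of a plane projective curve. -/
structure WeakComb (p : ℕ) where
  /-- the set of irreducible components -/
  C : Type
  [fintypeC : Fintype C]
  [decEqC : DecidableEq C]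
  [nonemptyC : Nonempty C]
  /-- the set of singular points -/
  S : Type
  [fintypeS : Fintype S]
  [decEqS : DecidableEq S]
  /-- the local branches at each singular point -/
  Δ : S → Type
  [fintypeΔ : ∀ P, Fintype (Δ P)]
  [decEqΔ : ∀ P, DecidableEq (Δ P)]
  /-- each branch belongs to a component -/
  φ : ∀ P, Δ P → C
  /-- local intersection multiplicities of pairs of branches -/
  μ : ∀ P, Δ P → Δ P → ℕ
  μ_symm : ∀ P δ δ', φ P δ ≠ φ P δ' → μ P δ δ' = μ P δ' δ
  μ_pos : ∀ P δ δ', φ P δ ≠ φ P δ' → 0 < μ P δ δ'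

attribute [instance] WeakComb.fintypeC WeakComb.decEqC WeakComb.nonemptyC
attribute [instance] WeakComb.fintypeS WeakComb.decEqS WeakComb.fintypeΔ WeakComb.decEqΔ

namespace WeakComb

variable {p : ℕ} (W : WeakComb p)

/-- μ_P(δ,δ') with the convention that it vanishes on pairs of branches of the same component. -/
def muk (P : W.S) (δ δ' : W.Δ P) : ℕ :=
  if W.φ P δ = W.φ P δ' then 0 else W.μ P δ δ'

/-- μ_P(δ, j): the multiplicity of intersection of the branch δ with the component j. -/
def muC (P : W.S) (δ : W.Δ P) (j : W.C) : ℕ :=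
  ∑ δ' : W.Δ P, if W.φ P δ' = j then W.muk P δ δ' else 0

/-- A degree assignment: positive degrees satisfying the Bezout condition. -/
def IsDegree (d : W.C → ℕ) : Prop :=
  (∀ i, 0 < d i) ∧
  ∀ i j, i ≠ j →
    d i * d j = ∑ P : W.S, ∑ δ : W.Δ P, if W.φ P δ = i then W.muC P δ j else 0

/-- The basis vector σ_i of A¹ = (C → ZMod p). -/
noncomputable def sigma (i : W.C) : W.C → ZMod p := Pi.single i 1

/-- The basis vector ψ_P^δ of A_P = (Δ_P → ZMod p). -/
noncomputable def psi (P : W.S) (δ : W.Δ P) : W.Δ P → ZMod p := Pi.single δ 1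

/-- ψ_P^δ ∧ ψ_P^δ' as an element of Λ² A_P. -/
noncomputable def psiW (P : W.S) (δ δ' : W.Δ P) : ⋀[ZMod p]^2 (W.Δ P → ZMod p) :=
  ⟨ExteriorAlgebra.ιMulti (ZMod p) 2 ![W.psi P δ, W.psi P δ'],
   ExteriorAlgebra.ιMulti_range (ZMod p) 2 (Set.mem_range_self _)⟩

/-- The subspace I_P of Λ² A_P. -/
noncomputable def IP (P : W.S) : Submodule (ZMod p) (⋀[ZMod p]^2 (W.Δ P → ZMod p)) :=
  Submodule.span (ZMod p)
    ({x | ∃ δ1 δ2 δ3 : W.Δ P, x = W.psiW P δ1 δ2 + W.psiW P δ2 δ3 + W.psiW P δ3 δ1} ∪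
     {x | (∀ δ δ' : W.Δ P, W.φ P δ = W.φ P δ') ∧ ∃ δ1 δ2 : W.Δ P, x = W.psiW P δ1 δ2})

/-- The degree-two part A² = A^{2,0} ⊕ A^{2,∞} of the Combinatorial Aomoto algebra. -/
abbrev A2 (d : W.C → ℕ) : Type :=
  ((P : W.S) → (⋀[ZMod p]^2 (W.Δ P → ZMod p)) ⧸ W.IP P) ×
  ({i : W.C // p ∣ d i} → ZMod p)

/-- The wedge product A¹ × A¹ → A², extending σ_i ∧ σ_j bilinearly. -/
noncomputable def wedge (d : W.C → ℕ) (α β : W.C → ZMod p) : W.A2 d :=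
  (fun P => ∑ δ : W.Δ P, ∑ δ' : W.Δ P,
      (α (W.φ P δ) * β (W.φ P δ') * (W.muk P δ δ' : ZMod p)) •
        Submodule.Quotient.mk (W.psiW P δ δ'),
   fun i => α i.1 * (∑ j : W.C, (d j : ZMod p) * β j)
          - β i.1 * (∑ j : W.C, (d j : ZMod p) * α j))

/-- The linear map ·∧α : A¹ → A², β ↦ β ∧ α. -/
noncomputable def wedgeL (d : W.C → ℕ) (α : W.C → ZMod p) :
    (W.C → ZMod p) →ₗ[ZMod p] W.A2 d where
  toFun β := W.wedge d β α
  map_add' β γ := by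
    refine Prod.ext ?_ ?_
    · funext P
      simp only [wedge, Pi.add_apply, Prod.fst_add]
      rw [← Finset.sum_add_distrib]
      refine Finset.sum_congr rfl fun δ _ => ?_
      rw [← Finset.sum_add_distrib]
      refine Finset.sum_congr rfl fun δ' _ => ?_
      rw [← add_smul, add_mul, add_mul]
    · funext i
      simp only [wedge, Pi.add_apply, Prod.snd_add]
      rw [show (∑ x : W.C, (d x : ZMod p) * (β x + γ x))
            = (∑ x : W.C, (d x : ZMod p) * β x) + ∑ x : W.C, (d x : ZMod p) * γ x by
        rw [← Finset.sum_add_distrib]; exact Finset.sum_congr rfl fun x _ => by ring]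
      ring
  map_smul' c β := by
    refine Prod.ext ?_ ?_
    · funext P
      simp only [wedge, Pi.smul_apply, smul_eq_mul, RingHom.id_apply, Prod.smul_fst]
      rw [Finset.smul_sum]
      refine Finset.sum_congr rfl fun δ _ => ?_
      rw [Finset.smul_sum]
      refine Finset.sum_congr rfl fun δ' _ => ?_
      rw [smul_smul]
      ring_nf
    · funext i
      simp only [wedge, Pi.smul_apply, smul_eq_mul, RingHom.id_apply, Prod.smul_snd]
      rw [show (∑ x : W.C, (d x : ZMod p) * (c * β x)) = c * ∑ x : W.C, (d x : ZMod p) * β x by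
        rw [Finset.mul_sum]; exact Finset.sum_congr rfl fun x _ => by ring]
      ring

/-- The kernel of ·∧α : A¹ → A². -/
noncomputable def wedgeKer (d : W.C → ℕ) (α : W.C → ZMod p) :
    Submodule (ZMod p) (W.C → ZMod p) :=
  LinearMap.ker (W.wedgeL d α)

/-- H¹ of the Combinatorial Aomoto complex with differential ·∧α. -/
noncomputable abbrev H1 (d : W.C → ℕ) (α : W.C → ZMod p) :=
  (W.wedgeKer d α) ⧸
    (Submodule.comap (W.wedgeKer d α).subtype (Submodule.span (ZMod p) {α}))

end WeakComb

namespace WeakComb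

variable {p : ℕ} (W : WeakComb p)

/-- The resonance condition for (α,β) at the branch δ of the point P. -/
def ResCond (α β : W.C → ZMod p) (P : W.S) (δ : W.Δ P) : Prop :=
  β (W.φ P δ) * (∑ j : W.C, (W.muC P δ j : ZMod p) * α j)
    - α (W.φ P δ) * (∑ j : W.C, (W.muC P δ j : ZMod p) * β j) = 0

/-- P is a p-transversal point for the pair of components i ≠ j. -/
def PTransPoint (P : W.S) (i j : W.C) : Prop :=
  i ≠ j ∧ (∀ δ : W.Δ P, W.φ P δ = i ∨ W.φ P δ = j) ∧
  (∃ δ : W.Δ P, W.φ P δ = i) ∧ (∃ δ : W.Δ P, W.φ P δ = j) ∧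
  ((∃ δ : W.Δ P, W.φ P δ = i ∧ ((W.muC P δ j : ZMod p) ≠ 0)) ∨
   (∃ δ : W.Δ P, W.φ P δ = j ∧ ((W.muC P δ i : ZMod p) ≠ 0)))

/-- The components i and j are p-transversal at a point. -/
def PTransComponents (i j : W.C) : Prop := ∃ P : W.S, W.PTransPoint P i j

/-- α is non-coordinate if all its coordinates are nonzero. -/
def NonCoordinate (α : W.C → ZMod p) : Prop := ∀ i, α i ≠ 0

end WeakComb

/-- The setoid (partition) obtained from s by merging the classes of c₀ and c₁. -/
def mergeSetoid {α : Type*} (s : Setoid α) (c₀ c₁ : α) : Setoid α :=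
  Relation.EqvGen.setoid (fun a b => s.r a b ∨ (a = c₀ ∧ b = c₁))

namespace WeakComb

variable {p : ℕ} (W : WeakComb p)

/-- W is p-transversal at P with respect to (α, π), where the surjection π is encoded by the
setoid s of its fibres; the two classes π(φ_P(Δ_P)) = {i',j'} are those of c₀ and c₁. -/
def PTransversalAt (α : W.C → ZMod p) (s : Setoid W.C) (P : W.S) (c₀ c₁ : W.C) : Prop :=
  ¬ s.r c₀ c₁ ∧
  (∀ δ : W.Δ P, s.r (W.φ P δ) c₀ ∨ s.r (W.φ P δ) c₁) ∧
  (∃ δ : W.Δ P, s.r (W.φ P δ) c₀) ∧ (∃ δ : W.Δ P, s.r (W.φ P δ) c₁) ∧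
  ∃ δ : W.Δ P, s.r (W.φ P δ) c₀ ∧
    (∑ δ' : W.Δ P, if s.r (W.φ P δ') c₁
        then (W.muk P δ δ' : ZMod p) * α (W.φ P δ') else 0) ≠ 0

/-- A p-reduction step with respect to α. -/
def RedStep (α : W.C → ZMod p) (s s' : Setoid W.C) : Prop :=
  ∃ (P : W.S) (c₀ c₁ : W.C), W.PTransversalAt α s P c₀ c₁ ∧ s' = mergeSetoid s c₀ c₁

/-- W is completely p-reductive with respect to α: starting from the identity partition (⊥),
some finite sequence of p-reduction steps reaches the one-class partition (⊤). -/
def CompletelyPReductive (α : W.C → ZMod p) : Prop :=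
  Relation.ReflTransGen (W.RedStep α) ⊥ ⊤

/-- β is π-proportional to α, for the surjection π encoded by the setoid s: on each class
of s, β is a scalar multiple of α. -/
def Proportional (s : Setoid W.C) (α β : W.C → ZMod p) : Prop :=
  ∀ c : W.C, ∃ l : ZMod p, ∀ c', s.r c c' → β c' = l * α c'

end WeakComb

/-- A combinatorial quasi-fiber structure of rank r on W. -/
structure QuasiFiber {p : ℕ} (W : WeakComb p) (r : ℕ) where
  /-- which quasi-fiber each component belongs to -/
  g : W.C → Fin r
  g_surj : Function.Surjective g
  /-- multiplicities of components inside the quasi-fibers -/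
  m : W.C → ℕ
  m_pos : ∀ c, 0 < m c
  /-- the set of base points -/
  B : Set W.S
  fiber_off_base : ∀ P : W.S, P ∉ B → ∀ δ δ' : W.Δ P, g (W.φ P δ) = g (W.φ P δ')

namespace WeakComb

variable {p : ℕ} (W : WeakComb p) {r : ℕ}

/-- M_s(δ) for a branch δ at a base point P. -/
noncomputable def Mcoef (F : QuasiFiber W r) (P : W.S) (δ : W.Δ P) (s : Fin r) : ZMod p :=
  ∑ δ' : W.Δ P,
    if W.φ P δ' ≠ W.φ P δ ∧ F.g (W.φ P δ') = s
      then ((F.m (W.φ P δ') * W.μ P δ δ' : ℕ) : ZMod p) else 0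

/-- ω_a = Σ_c m_c · a_{g(c)} · σ_c ∈ A¹. -/
noncomputable def omega (F : QuasiFiber W r) (a : Fin r → ZMod p) : W.C → ZMod p :=
  fun c => (F.m c : ZMod p) * a (F.g c)

/-- The restricted combinatorics W°_s of the quasi-fiber s. -/
noncomputable def restrict (F : QuasiFiber W r) (s : Fin r) : WeakComb p where
  C := {c : W.C // F.g c = s}
  fintypeC := Fintype.ofFinite _
  decEqC := inferInstance
  nonemptyC := by obtain ⟨c, hc⟩ := F.g_surj s; exact ⟨⟨c, hc⟩⟩
  S := {P : W.S // Nonempty (W.Δ P) ∧ ∀ δ : W.Δ P, F.g (W.φ P δ) = s}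
  fintypeS := Fintype.ofFinite _
  decEqS := inferInstance
  Δ := fun P => W.Δ P.1
  fintypeΔ := fun P => inferInstance
  decEqΔ := fun P => inferInstance
  φ := fun P δ => ⟨W.φ P.1 δ, P.2.2 δ⟩
  μ := fun P δ δ' => W.μ P.1 δ δ'
  μ_symm := fun P δ δ' h => W.μ_symm P.1 δ δ' (fun e => h (Subtype.ext e))
  μ_pos := fun P δ δ' h => W.μ_pos P.1 δ δ' (fun e => h (Subtype.ext e))

/-- The restriction ω_a|_s of ω_a to the restricted combinatorics W°_s. -/
noncomputable def omegaRes (F : QuasiFiber W r) (a : Fin r → ZMod p) (s : Fin r) :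
    (W.restrict F s).C → ZMod p :=
  fun c => (F.m c.1 : ZMod p) * a s

end WeakComb

section Auxiliary

variable {p : ℕ}

/-- Reversing the two branches changes the sign of `ψ_P^δ ∧ ψ_P^δ'`. -/
lemma psiW_swap (W : WeakComb p) (P : W.S) (δ δ' : W.Δ P) :
    W.psiW P δ' δ = - W.psiW P δ δ' := by
  apply Subtype.ext
  have h := (ExteriorAlgebra.ιMulti (ZMod p) 2).map_swap ![W.psi P δ, W.psi P δ']
    (i := 0) (j := 1) (by decide)
  have e : (![W.psi P δ, W.psi P δ'] ∘ Equiv.swap (0 : Fin 2) 1)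
      = ![W.psi P δ', W.psi P δ] := by
    funext i
    fin_cases i <;> simp
  rw [e] at h
  exact h

/-- Modulo `I_P`, the element `ψ_P^δ ∧ ψ_P^δ'` is a coboundary: it is the difference
`e δ' - e δ`, where `e δ` is the class of `ψ_P^{δ₀} ∧ ψ_P^δ` for a fixed branch `δ₀`. -/
lemma mk_psiW_eq_sub (W : WeakComb p) (P : W.S) (δ₀ δ δ' : W.Δ P) :
    (Submodule.Quotient.mk (W.psiW P δ δ') : _ ⧸ W.IP P)
      = Submodule.Quotient.mk (W.psiW P δ₀ δ') - Submodule.Quotient.mk (W.psiW P δ₀ δ) := by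
  rw [← Submodule.Quotient.mk_sub, Submodule.Quotient.eq]
  have h : W.psiW P δ₀ δ + W.psiW P δ δ' + W.psiW P δ' δ₀ ∈ W.IP P :=
    Submodule.subset_span (Or.inl ⟨δ₀, δ, δ', rfl⟩)
  rw [psiW_swap W P δ₀ δ'] at h
  convert h using 1
  abel

lemma muk_symm (W : WeakComb p) (P : W.S) (δ δ' : W.Δ P) :
    W.muk P δ δ' = W.muk P δ' δ := by
  unfold WeakComb.muk
  by_cases h : W.φ P δ = W.φ P δ'
  · rw [if_pos h, if_pos h.symm]
  · rw [if_neg h, if_neg (Ne.symm h), W.μ_symm P δ δ' h]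

/-- The local resonance equations at every branch at `P` force the `P`-component of `α ∧ β`
to vanish. -/
lemma wedge_fst_eq_zero (W : WeakComb p) (d : W.C → ℕ) (α β : W.C → ZMod p) (P : W.S)
    (h : ∀ δ : W.Δ P,
      β (W.φ P δ) * (∑ δ', (W.muk P δ δ' : ZMod p) * α (W.φ P δ'))
        = α (W.φ P δ) * (∑ δ', (W.muk P δ δ' : ZMod p) * β (W.φ P δ'))) :
    (W.wedge d α β).1 P = 0 := by
  rcases isEmpty_or_nonempty (W.Δ P) with hE | ⟨⟨δ₀⟩⟩
  · simp [WeakComb.wedge]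
  simp only [WeakComb.wedge]
  rw [Finset.sum_congr rfl fun δ _ => Finset.sum_congr rfl fun δ' _ => by
    rw [mk_psiW_eq_sub W P δ₀ δ δ', smul_sub]]
  simp only [Finset.sum_sub_distrib]
  rw [sub_eq_zero, Finset.sum_comm]
  refine Finset.sum_congr rfl fun δ _ => ?_
  rw [← Finset.sum_smul, ← Finset.sum_smul]
  congr 1
  have h' := h δ
  rw [Finset.mul_sum, Finset.mul_sum] at h'
  refine Eq.trans (Finset.sum_congr rfl fun δ' _ => ?_)
    (h'.trans (Finset.sum_congr rfl fun δ' _ => ?_))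
  · rw [muk_symm W P δ' δ]; ring
  · ring

/-- Off the base points `M_s(δ)` is an empty sum for `s ≠ g(φ_P(δ))`, so the vanishing assumed
at the base points holds at all points. -/
lemma Mcoef_eq_zero (W : WeakComb p) {r : ℕ} (F : QuasiFiber W r)
    (ha : ∀ P ∈ F.B, ∀ δ : W.Δ P, ∀ s : Fin r,
      s ≠ F.g (W.φ P δ) → W.Mcoef F P δ s = 0)
    (P : W.S) (δ : W.Δ P) (s : Fin r) (hs : s ≠ F.g (W.φ P δ)) : W.Mcoef F P δ s = 0 := by
  by_cases hP : P ∈ F.B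
  · exact ha P hP δ s hs
  · refine Finset.sum_eq_zero fun δ' _ => if_neg ?_
    rintro ⟨-, h⟩
    exact hs (h ▸ F.fiber_off_base P hP δ' δ)

lemma sum_muk_omega (W : WeakComb p) {r : ℕ} (F : QuasiFiber W r) (P : W.S) (δ : W.Δ P)
    (a : Fin r → ZMod p) :
    ∑ δ', (W.muk P δ δ' : ZMod p) * W.omega F a (W.φ P δ')
      = ∑ s, a s * W.Mcoef F P δ s := by
  simp only [WeakComb.Mcoef, Finset.mul_sum]
  rw [Finset.sum_comm]
  refine Finset.sum_congr rfl fun δ' _ => ?_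
  rw [Finset.sum_eq_single (F.g (W.φ P δ'))]
  · by_cases h : W.φ P δ = W.φ P δ'
    · simp [WeakComb.muk, h]
    · rw [if_pos ⟨Ne.symm h, rfl⟩]
      simp only [WeakComb.muk, if_neg h, WeakComb.omega]
      push_cast
      ring
  · intro s _ hs
    rw [if_neg fun h => hs h.2.symm, mul_zero]
  · simp

lemma sum_degree_omega (W : WeakComb p) (d : W.C → ℕ) {r : ℕ} (F : QuasiFiber W r)
    (hb : ∀ s : Fin r,
      ((∑ c : W.C, if F.g c = s then d c * F.m c else 0 : ℕ) : ZMod p) = 0)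
    (a : Fin r → ZMod p) :
    ∑ j : W.C, (d j : ZMod p) * W.omega F a j = 0 := by
  have h : ∑ j : W.C, (d j : ZMod p) * W.omega F a j
      = ∑ s, a s * ((∑ c : W.C, if F.g c = s then d c * F.m c else 0 : ℕ) : ZMod p) := by
    push_cast
    simp only [Finset.mul_sum]
    rw [Finset.sum_comm]
    refine Finset.sum_congr rfl fun c _ => ?_
    simp only [mul_ite, mul_zero, Finset.sum_ite_eq, Finset.mem_univ, if_true, WeakComb.omega]
    ring
  rw [h]
  exact Finset.sum_eq_zero fun s _ => by rw [hb s, mul_zero]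

/-- The forms `ω_a` and `ω_b` wedge to zero. -/
lemma wedge_omega_eq_zero (W : WeakComb p) (d : W.C → ℕ) {r : ℕ} (F : QuasiFiber W r)
    (ha : ∀ P ∈ F.B, ∀ δ : W.Δ P, ∀ s : Fin r,
      s ≠ F.g (W.φ P δ) → W.Mcoef F P δ s = 0)
    (hb : ∀ s : Fin r,
      ((∑ c : W.C, if F.g c = s then d c * F.m c else 0 : ℕ) : ZMod p) = 0)
    (a b : Fin r → ZMod p) : W.wedge d (W.omega F a) (W.omega F b) = 0 := by
  refine Prod.ext (funext fun P => ?_) (funext fun i => ?_)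
  · refine wedge_fst_eq_zero W d _ _ P fun δ => ?_
    -- only the term of the quasi-fiber containing the branch survives
    have key : ∀ e : Fin r → ZMod p, ∑ s, e s * W.Mcoef F P δ s
        = e (F.g (W.φ P δ)) * W.Mcoef F P δ (F.g (W.φ P δ)) := fun e =>
      Finset.sum_eq_single _
        (fun s _ hs => by rw [Mcoef_eq_zero W F ha P δ s hs, mul_zero]) (by simp)
    rw [sum_muk_omega, sum_muk_omega, key, key]
    simp only [WeakComb.omega]
    ring
  · simp [WeakComb.wedge, sum_degree_omega W d F hb]

/-- The linear map `a ↦ ω_a`. -/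
noncomputable def omegaL (W : WeakComb p) {r : ℕ} (F : QuasiFiber W r) :
    (Fin r → ZMod p) →ₗ[ZMod p] (W.C → ZMod p) where
  toFun a := W.omega F a
  map_add' a b := by
    funext c
    simp only [WeakComb.omega, Pi.add_apply]
    ring
  map_smul' t a := by
    funext c
    simp only [WeakComb.omega, Pi.smul_apply, smul_eq_mul, RingHom.id_apply]
    ring

lemma omegaL_injective [Fact p.Prime] (W : WeakComb p) {r : ℕ} (F : QuasiFiber W r)
    (hm : ∀ s : Fin r, ∃ c : W.C, F.g c = s ∧ ¬ p ∣ F.m c) :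
    Function.Injective (omegaL W F) := by
  intro a b hab
  funext s
  obtain ⟨c, rfl, hc⟩ := hm s
  have h : (F.m c : ZMod p) * a (F.g c) = F.m c * b (F.g c) := congrFun hab c
  exact mul_left_cancel₀ (fun h0 => hc ((ZMod.natCast_eq_zero_iff _ _).1 h0)) h

/-- Passing from the kernel of `· ∧ α` to `H¹` lowers the dimension by at most one. -/
lemma finrank_wedgeKer_le [Fact p.Prime] (W : WeakComb p) (d : W.C → ℕ) (α : W.C → ZMod p) :
    Module.finrank (ZMod p) (W.wedgeKer d α) ≤ Module.finrank (ZMod p) (W.H1 d α) + 1 := by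
  rw [← Submodule.finrank_quotient_add_finrank
    (Submodule.comap (W.wedgeKer d α).subtype (Submodule.span (ZMod p) {α}))]
  refine Nat.add_le_add_left ?_ _
  rw [← Submodule.finrank_map_subtype_eq]
  exact (Submodule.finrank_mono (Submodule.map_comap_le _ _)).trans
    (by simpa using finrank_span_le_card (R := ZMod p) ({α} : Set (W.C → ZMod p)))

end Auxiliary

section Statements

open WeakComb

variable {p : ℕ} [Fact p.Prime]

/-- Theorem `fibered`, part 2: index divisible by p. -/
theorem stmt11 (W : WeakComb p) (d : W.C → ℕ) (hd : W.IsDegree d)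
    {r : ℕ} (F : QuasiFiber W r)
    (ha : ∀ P ∈ F.B, ∀ δ : W.Δ P, ∀ s : Fin r,
      s ≠ F.g (W.φ P δ) → W.Mcoef F P δ s = 0)
    (hb : ∀ s : Fin r,
      ((∑ c : W.C, if F.g c = s then d c * F.m c else 0 : ℕ) : ZMod p) = 0) :
    (∀ a b : Fin r → ZMod p, W.wedge d (W.omega F a) (W.omega F b) = 0) ∧
    ((∀ s : Fin r, ∃ c : W.C, F.g c = s ∧ ¬ p ∣ F.m c) →
      ∀ a : Fin r → ZMod p,
        r - 1 ≤ Module.finrank (ZMod p) (W.H1 d (W.omega F a))) := by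
  refine ⟨wedge_omega_eq_zero W d F ha hb, fun hm a => ?_⟩
  have hmem : ∀ b, omegaL W F b ∈ W.wedgeKer d (W.omega F a) := fun b =>
    LinearMap.mem_ker.2 (wedge_omega_eq_zero W d F ha hb b a)
  have hinj : Function.Injective ((omegaL W F).codRestrict _ hmem) := fun x y hxy =>
    omegaL_injective W F hm (congrArg Subtype.val hxy)
  have h := (LinearMap.finrank_le_finrank_of_injective hinj).trans
    (finrank_wedgeKer_le W d (W.omega F a))
  rw [Module.finrank_fin_fun] at h
  exact Nat.sub_le_iff_le_add.2 h

end Statements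
end

section
/- Let W carry a degree assignment (d_c)_{c∈C} and a combinatorial quasi-fiber structure (g, (m_c), B) of rank r. Assume p ∤ m_c for every c ∈ C, let a ∈ k^r satisfy a_s ≠ 0 for every s, and assume that for each s ∈ {1,…,r} the restricted combinatorics W°_s is completely p-reductive with respect to ω_a|_s. Then every η ∈ A¹ with η ∧ ω_a = 0 in A²_{W,k} belongs to R_φ, i.e. η = Σ_{c∈C} m_c·b_{g(c)}·σ_c for some b ∈ k^r. (Combinatorial form of the Lemma 'fiber_p_reductive'.) -/
/-!
When the branches at `P` lie on at least two components (otherwise all multiplicities at `P` vanish),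
the quotient `Λ² A_P / I_P` carries, for each branch `δ₀` at `P`, the functional induced by
`u ∧ v ↦ u(δ₀) ∑ v - v(δ₀) ∑ u`; it kills the cyclic relations in `I_P`, so evaluating it on
`η ∧ ω = 0` yields the resonance condition at `δ₀`:
`η(δ₀) ∑ μ(δ₀, δ') ω(δ') = ω(δ₀) ∑ μ(δ₀, δ') η(δ')` (`wedge_resonance`).

All coordinates of `ω = ω_a` are nonzero, so the ratio `l = η / ω` makes sense. If `l` is constant on
the classes of a partition and `P` is `p`-transversal for the two classes of `c₀`, `c₁`, the resonance
condition at the distinguished branch reads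
`ω(δ₀) (l(c₀) - l(c₁)) ∑_{δ' in the class of c₁} μ(δ₀, δ') ω(δ') = 0`, and therefore `l(c₀) = l(c₁)`
(`redStep_le_ker`). Along a complete reduction `l` becomes constant on every quasi-fiber,
which says exactly that `η` lies in `R_φ`.
-/

open scoped Classical

namespace WeakComb

variable {p : ℕ} (W : WeakComb p)

/-- The functional `u ∧ v ↦ u(δ₀) ∑ v - v(δ₀) ∑ u` on `Λ² A_P`, written as the `2 × 2` determinant
of the vectors `(u(δ₀), ∑ u)` and `(v(δ₀), ∑ v)`. -/
noncomputable def branchFunctional (P : W.S) (δ₀ : W.Δ P) :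
    ⋀[ZMod p]^2 (W.Δ P → ZMod p) →ₗ[ZMod p] ZMod p :=
  exteriorPower.alternatingMapLinearEquiv
    ((Matrix.detRowAlternating (R := ZMod p) (n := Fin 2)).compLinearMap
      (LinearMap.pi ![LinearMap.proj δ₀, ∑ δ : W.Δ P, LinearMap.proj δ]))

theorem branchFunctional_psiW (P : W.S) (δ₀ δ δ' : W.Δ P) :
    W.branchFunctional P δ₀ (W.psiW P δ δ') =
      (if δ = δ₀ then 1 else 0) - (if δ' = δ₀ then 1 else 0) := by
  have h : W.psiW P δ δ' = exteriorPower.ιMulti (ZMod p) 2 ![W.psi P δ, W.psi P δ'] := rfl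
  rw [h, branchFunctional, exteriorPower.alternatingMapLinearEquiv_apply_ιMulti,
    AlternatingMap.compLinearMap_apply]
  refine (Matrix.det_fin_two _).trans ?_
  simp [psi, Pi.single_apply, eq_comm]

theorem muk_comm (P : W.S) (δ δ' : W.Δ P) : W.muk P δ δ' = W.muk P δ' δ := by
  by_cases h : W.φ P δ = W.φ P δ'
  · simp [muk, h]
  · simp only [muk, h, Ne.symm h, if_false]
    exact W.μ_symm P δ δ' h

/-- The resonance condition at a branch `δ₀`, extracted from the vanishing of a wedge product. -/
theorem wedge_resonance {d : W.C → ℕ} {η ω : W.C → ZMod p} (h : W.wedge d η ω = 0)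
    (P : W.S) (δ₀ : W.Δ P) :
    η (W.φ P δ₀) * ∑ δ : W.Δ P, (W.muk P δ₀ δ : ZMod p) * ω (W.φ P δ) =
      ω (W.φ P δ₀) * ∑ δ : W.Δ P, (W.muk P δ₀ δ : ZMod p) * η (W.φ P δ) := by
  by_cases hs : ∀ δ δ' : W.Δ P, W.φ P δ = W.φ P δ'
  · -- all branches lie on one component, so every multiplicity vanishes
    have h0 : ∀ δ, W.muk P δ₀ δ = 0 := fun δ => by simp [muk, hs δ₀ δ]
    simp [h0]
  have hker : W.IP P ≤ LinearMap.ker (W.branchFunctional P δ₀) := by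
    refine Submodule.span_le.2 ?_
    rintro x (⟨δ1, δ2, δ3, rfl⟩ | ⟨hx, -⟩)
    · simp only [SetLike.mem_coe, LinearMap.mem_ker, map_add, branchFunctional_psiW]
      ring
    · exact absurd hx hs
  have hP := congrArg ((W.IP P).liftQ (W.branchFunctional P δ₀) hker)
    (congrFun (congrArg Prod.fst h) P)
  simp only [wedge, map_sum, map_smul, Submodule.liftQ_apply, branchFunctional_psiW, smul_eq_mul,
    Prod.fst_zero, Pi.zero_apply, map_zero, mul_sub, Finset.sum_sub_distrib, mul_ite, mul_one,
    mul_zero, Finset.sum_ite_eq', Finset.mem_univ, if_true] at hP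
  rw [Finset.sum_comm] at hP
  simp only [Finset.sum_ite_eq', Finset.mem_univ, if_true] at hP
  rw [sub_eq_zero] at hP
  rw [Finset.mul_sum, Finset.mul_sum]
  convert hP using 1
  · exact Finset.sum_congr rfl fun δ _ => by ring
  · exact Finset.sum_congr rfl fun δ _ => by rw [W.muk_comm P δ₀ δ]; ring

theorem muk_restrict {r : ℕ} (F : QuasiFiber W r) (s : Fin r) (P : (W.restrict F s).S)
    (δ δ' : (W.restrict F s).Δ P) :
    (W.restrict F s).muk P δ δ' = W.muk P.1 δ δ' := by
  have : (W.restrict F s).φ P δ = (W.restrict F s).φ P δ' ↔ W.φ P.1 δ = W.φ P.1 δ' :=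
    Subtype.ext_iff
  by_cases h : W.φ P.1 δ = W.φ P.1 δ'
  · exact (if_pos (this.2 h)).trans (if_pos h).symm
  · exact (if_neg (mt this.1 h)).trans (if_neg h).symm

variable [Fact p.Prime]

/-- A reduction step preserves the property that the ratio `η / ω` is constant on the classes of the
partition, as soon as the resonance condition holds and `ω` has no zero coordinate. -/
theorem redStep_le_ker {η ω : W.C → ZMod p} (hω : ∀ c, ω c ≠ 0)
    (hres : ∀ (P : W.S) (δ₀ : W.Δ P),
      η (W.φ P δ₀) * ∑ δ : W.Δ P, (W.muk P δ₀ δ : ZMod p) * ω (W.φ P δ) =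
        ω (W.φ P δ₀) * ∑ δ : W.Δ P, (W.muk P δ₀ δ : ZMod p) * η (W.φ P δ))
    {s s' : Setoid W.C} (hs : s ≤ Setoid.ker fun c => η c / ω c) (hstep : W.RedStep ω s s') :
    s' ≤ Setoid.ker fun c => η c / ω c := by
  obtain ⟨P, c₀, c₁, ⟨-, hcov, -, -, δ₀, hδ₀, hne⟩, rfl⟩ := hstep
  have hη : ∀ c c', s.r c c' → η c = η c' / ω c' * ω c := fun c c' h => by
    have : η c / ω c = η c' / ω c' := hs h
    rw [← this, div_mul_cancel₀ _ (hω c)]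
  have key : η c₀ / ω c₀ = η c₁ / ω c₁ := by
    have h := hres P δ₀
    rw [hη _ _ hδ₀, mul_assoc, mul_left_comm, mul_right_inj' (hω _), Finset.mul_sum,
      ← sub_eq_zero, ← Finset.sum_sub_distrib] at h
    -- only the branches in the class of `c₁` contribute to the difference
    have h' : (η c₀ / ω c₀ - η c₁ / ω c₁) * (∑ δ' : W.Δ P, if s.r (W.φ P δ') c₁
        then (W.muk P δ₀ δ' : ZMod p) * ω (W.φ P δ') else 0) = 0 := by
      rw [Finset.mul_sum]
      refine Eq.trans ?_ h
      refine Finset.sum_congr rfl fun δ _ => ?_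
      split_ifs with h1
      · rw [hη _ _ h1]; ring
      · rw [hη _ _ ((hcov δ).resolve_right h1)]; ring
    exact sub_eq_zero.1 ((mul_eq_zero.1 h').resolve_right hne)
  refine Setoid.eqvGen_le ?_
  rintro x y (hxy | ⟨rfl, rfl⟩)
  · exact hs hxy
  · exact key

theorem ratio_const_of_completelyPReductive {η ω : W.C → ZMod p} (hω : ∀ c, ω c ≠ 0)
    (hres : ∀ (P : W.S) (δ₀ : W.Δ P),
      η (W.φ P δ₀) * ∑ δ : W.Δ P, (W.muk P δ₀ δ : ZMod p) * ω (W.φ P δ) =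
        ω (W.φ P δ₀) * ∑ δ : W.Δ P, (W.muk P δ₀ δ : ZMod p) * η (W.φ P δ))
    (hred : W.CompletelyPReductive ω) (c c' : W.C) : η c / ω c = η c' / ω c' := by
  have h : (⊤ : Setoid W.C) ≤ Setoid.ker fun c => η c / ω c := by
    refine Relation.ReflTransGen.head_induction_on
      (motive := fun s _ => s ≤ (Setoid.ker fun c => η c / ω c) →
        (⊤ : Setoid W.C) ≤ Setoid.ker fun c => η c / ω c) hred id ?_ bot_le
    intro s t hst _ ih hs
    exact ih (W.redStep_le_ker hω hres hs hst)
  exact h (show (⊤ : Setoid W.C) c c' from trivial)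

end WeakComb

section Statements

open WeakComb

variable {p : ℕ} [Fact p.Prime]

/-- Lemma `fiber_p_reductive`. -/
theorem stmt12 (W : WeakComb p) (d : W.C → ℕ) (hd : W.IsDegree d)
    {r : ℕ} (F : QuasiFiber W r)
    (hm : ∀ c : W.C, ¬ p ∣ F.m c)
    (a : Fin r → ZMod p) (ha : ∀ s, a s ≠ 0)
    (hred : ∀ s : Fin r,
      (W.restrict F s).CompletelyPReductive (W.omegaRes F a s)) :
    ∀ η : W.C → ZMod p, W.wedge d η (W.omega F a) = 0 →
      ∃ b : Fin r → ZMod p, η = W.omega F b := by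
  intro η hη
  have hm0 : ∀ c, (F.m c : ZMod p) ≠ 0 := fun c h => hm c ((ZMod.natCast_eq_zero_iff _ _).1 h)
  have hconst : ∀ c c' : W.C, F.g c = F.g c' →
      η c / W.omega F a c = η c' / W.omega F a c' := by
    intro c c' hcc
    have h := (W.restrict F (F.g c')).ratio_const_of_completelyPReductive
      (η := fun x => η x.1) (ω := W.omegaRes F a (F.g c'))
      (fun x => mul_ne_zero (hm0 x.1) (ha _)) ?_ (hred _) ⟨c, hcc⟩ ⟨c', rfl⟩
    · simpa only [omega, omegaRes, hcc] using h
    · intro P δ₀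
      have hω : ∀ x : (W.restrict F (F.g c')).C,
          W.omegaRes F a (F.g c') x = W.omega F a x.1 := fun x => by
        simp only [omega, omegaRes, x.2]
      simp only [hω, W.muk_restrict]
      exact W.wedge_resonance hη P.1 δ₀
  choose c hc using F.g_surj
  refine ⟨fun s => a s * (η (c s) / W.omega F a (c s)), funext fun x => ?_⟩
  have h := hconst x (c (F.g x)) (hc _).symm
  change η x = (F.m x : ZMod p) * (a (F.g x) * _)
  rw [← h, ← mul_assoc]
  exact (mul_div_cancel₀ _ (mul_ne_zero (hm0 x) (ha _))).symm

end Statements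
end

section
/- Let W carry a degree assignment (d_c)_{c∈C} and a combinatorial quasi-fiber structure (g, (m_c), B) of rank r with r ≥ 2. Assume: (a) p ∤ m_c for every c ∈ C; (b) M_s(δ) = 0 in k for every P ∈ B, every δ ∈ Δ_P and every s ≠ g(φ_P(δ)); (c) Σ_{c∈g^{-1}(s)} d_c·m_c ≡ 0 (mod p) for every s ∈ {1,…,r}; (d) for each s, the restricted combinatorics W°_s is completely p-reductive with respect to ω_𝟙|_s, where 𝟙 = (1,…,1) ∈ k^r. Then W is NOT completely p-reductive with respect to ω_𝟙 = Σ_{c∈C} m_c·σ_c. (Combinatorial form of the Corollary: a quasi fiber-type curve of prime index p, with at least two fibers, whose fibers are completely p-reductive, is itself not completely p-reductive.) -/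
/-!
Every partition reached by reduction steps is finer than the partition of the components into
quasi-fibers. Indeed, suppose that a step at `P` merged two classes lying in different
quasi-fibers `s₀ ≠ s₁`. Then `P` is a base point, and the branches at `P` in the second class are
exactly those in the quasi-fiber `s₁`; so the sum whose non-vanishing is required by
`p`-transversality at a branch `δ` of the first class is `M_{s₁}(δ)`, which is zero by hypothesis
(`WeakComb.RedStep.le_ker`). Since there are at least two quasi-fibers, the one-class partition is
never reached.
-/

open scoped Classical

/-- A reduction step preserves the property that each class lies in a single quasi-fiber. -/
theorem WeakComb.RedStep.le_ker {p : ℕ} {W : WeakComb p} {r : ℕ} {F : QuasiFiber W r}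
    (hM : ∀ P ∈ F.B, ∀ δ : W.Δ P, ∀ s : Fin r,
      s ≠ F.g (W.φ P δ) → W.Mcoef F P δ s = 0)
    {s s' : Setoid W.C} (hstep : W.RedStep (W.omega F fun _ => 1) s s')
    (hs : ∀ c c', s.r c c' → F.g c = F.g c') (c c' : W.C) (hc : s'.r c c') :
    F.g c = F.g c' := by
  obtain ⟨P, c₀, c₁, ⟨-, hcover, -, ⟨δ₁, hδ₁⟩, δ, hδ, hsum⟩, rfl⟩ := hstep
  have key : F.g c₀ = F.g c₁ := by
    by_contra hne
    have hPB : P ∈ F.B := by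
      by_contra hP
      exact hne ((hs _ _ hδ).symm.trans ((F.fiber_off_base P hP δ δ₁).trans (hs _ _ hδ₁)))
    have hclass (δ' : W.Δ P) : s.r (W.φ P δ') c₁ ↔ F.g (W.φ P δ') = F.g c₁ :=
      ⟨hs _ _, fun h => (hcover δ').resolve_left fun h₀ => hne ((hs _ _ h₀).symm.trans h)⟩
    refine hsum (Eq.trans ?_ (hM P hPB δ (F.g c₁) fun h => hne ((hs _ _ hδ).symm.trans h.symm)))
    refine Finset.sum_congr rfl fun δ' _ => ?_
    by_cases h₁ : F.g (W.φ P δ') = F.g c₁ <;> by_cases h₂ : W.φ P δ' = W.φ P δ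
    · simp [hclass, WeakComb.muk, h₂]
    · simp [hclass, WeakComb.muk, WeakComb.omega, h₁, h₂, Ne.symm h₂, mul_comm]
    · simp [hclass, h₁]
    · simp [hclass, h₁]
  have hle : mergeSetoid s c₀ c₁ ≤ Setoid.ker F.g := by
    refine Setoid.eqvGen_le ?_
    rintro a b (h | ⟨rfl, rfl⟩)
    · exact hs _ _ h
    · exact key
  exact hle hc

section Statements

open WeakComb

variable {p : ℕ} [Fact p.Prime]

/-- Corollary `C_not_p_reductive`. -/
theorem stmt15 (W : WeakComb p) (d : W.C → ℕ) (hd : W.IsDegree d)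
    {r : ℕ} (hr : 2 ≤ r) (F : QuasiFiber W r)
    (hm : ∀ c : W.C, ¬ p ∣ F.m c)
    (hM : ∀ P ∈ F.B, ∀ δ : W.Δ P, ∀ s : Fin r,
      s ≠ F.g (W.φ P δ) → W.Mcoef F P δ s = 0)
    (hD : ∀ s : Fin r,
      ((∑ c : W.C, if F.g c = s then d c * F.m c else 0 : ℕ) : ZMod p) = 0)
    (hred : ∀ s : Fin r,
      (W.restrict F s).CompletelyPReductive
        (W.omegaRes F (fun _ => 1) s)) :
    ¬ W.CompletelyPReductive (W.omega F fun _ => 1) := by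
  intro hW
  have hinv (s : Setoid W.C) (h : Relation.ReflTransGen (W.RedStep (W.omega F fun _ => 1)) ⊥ s) :
      ∀ c c', s.r c c' → F.g c = F.g c' := by
    induction h with
    | refl => exact fun c c' h => congrArg F.g h
    | tail _ hstep ih => exact hstep.le_ker hM ih
  obtain ⟨c₀, hc₀⟩ := F.g_surj ⟨0, by omega⟩
  obtain ⟨c₁, hc₁⟩ := F.g_surj ⟨1, by omega⟩
  have h := hinv ⊤ hW c₀ c₁ trivial
  rw [hc₀, hc₁] at h
  simp at h

end Statements
end
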